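/- arXiv:2011.13652 — 4 statements merged into one kernel-verified Lean document; each statement's English description precedes it below -/
import Mathlib

section
/- Let c > 0, m_L ≤ m ≤ m_U and τ_L ≤ τ ≤ τ_U. If w satisfies all four McCormick envelope inequalities for the product c·m·τ with bounds m ∈ [m_L, m_U], τ ∈ [τ_L, τ_U], then the violation of the bilinear constraint is bounded by |w − c·m·τ| ≤ c·(m_U − m_L)·(τ_U − τ_L)/4. -/
theorem mccormick_min_aux (a b p q x : ℝ) (ha : 0 ≤ a) (hb : 0 ≤ b) (hp : 0 ≤ p) (hq : 0 ≤ q)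
    (h1 : x ≤ a * p) (h2 : x ≤ b * q) : 4 * x ≤ (a + b) * (p + q) := by
  rcases le_total x 0 with hx | hx
  · have : 0 ≤ (a + b) * (p + q) := by positivity
    linarith
  · have h3 : x * x ≤ (a * p) * (b * q) := mul_le_mul h1 h2 hx (by positivity)
    have h4 : 2 * x ≤ a * q + b * p := by
      refine (abs_le_of_sq_le_sq' ?_ (by positivity)).2
      nlinarith [sq_nonneg (a * q - b * p)]
    nlinarith

/-- Any point of the McCormick relaxation violates the bilinear
constraint by at most `c·(mU − mL)·(τU − τL)/4`. -/
theorem mccormick_gap_bound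
    (c mL mU τL τU m τ w : ℝ)
    (hc : 0 < c)
    (hmL : mL ≤ m) (hmU : m ≤ mU) (hτL : τL ≤ τ) (hτU : τ ≤ τU)
    (h1 : w ≥ c * (mL * τ + τL * m - mL * τL))
    (h2 : w ≥ c * (mU * τ + τU * m - mU * τU))
    (h3 : w ≤ c * (mU * τ + τL * m - mU * τL))
    (h4 : w ≤ c * (mL * τ + τU * m - mL * τU)) :
    |w - c * m * τ| ≤ c * (mU - mL) * (τU - τL) / 4 := by
  have key : ∀ y : ℝ, c * (y / c) = y := fun y => by field_simp
  have hd : ∀ y z : ℝ, y ≤ c * z → y / c ≤ z := fun y z h => by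
    rw [div_le_iff₀ hc]; linarith
  have A := mccormick_min_aux (m - mL) (mU - m) (τ - τL) (τU - τ) ((c * m * τ - w) / c)
    (by linarith) (by linarith) (by linarith) (by linarith)
    (hd _ _ (by linarith)) (hd _ _ (by linarith))
  have B := mccormick_min_aux (m - mL) (mU - m) (τU - τ) (τ - τL) ((w - c * m * τ) / c)
    (by linarith) (by linarith) (by linarith) (by linarith)
    (hd _ _ (by linarith)) (hd _ _ (by linarith))
  have A' := mul_le_mul_of_nonneg_left A hc.le
  have B' := mul_le_mul_of_nonneg_left B hc.le
  have kA := key (c * m * τ - w)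
  have kB := key (w - c * m * τ)
  rw [abs_le]
  constructor <;> linarith
end

section
/- Let Δx ≥ 0 and Δy ≥ 0, and let a ∈ [0, Δx], b ∈ [0, Δy]. Then min(a·b, (Δx − a)·(Δy − b)) ≤ Δx·Δy/4. -/
/-- key auxiliary inequality:
`min(a·b, (Δx − a)·(Δy − b)) ≤ Δx·Δy/4`. -/
theorem min_prod_le_quarter
    (Δx Δy a b : ℝ)
    (hΔx : 0 ≤ Δx) (hΔy : 0 ≤ Δy)
    (ha0 : 0 ≤ a) (ha : a ≤ Δx) (hb0 : 0 ≤ b) (hb : b ≤ Δy) :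
    min (a * b) ((Δx - a) * (Δy - b)) ≤ Δx * Δy / 4 := by
  by_contra h
  rw [not_le, lt_min_iff] at h
  obtain ⟨h1, h2⟩ := h
  have hP : 0 ≤ Δx * Δy / 4 := by positivity
  have h3 : (Δx * Δy / 4) * (Δx * Δy / 4) < (a * b) * ((Δx - a) * (Δy - b)) :=
    mul_lt_mul'' h1 h2 hP hP
  have h4 : a * (Δx - a) ≤ Δx ^ 2 / 4 := by nlinarith [sq_nonneg (2 * a - Δx)]
  have h5 : b * (Δy - b) ≤ Δy ^ 2 / 4 := by nlinarith [sq_nonneg (2 * b - Δy)]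
  have h6 : (a * (Δx - a)) * (b * (Δy - b)) ≤ (Δx ^ 2 / 4) * (Δy ^ 2 / 4) :=
    mul_le_mul h4 h5 (mul_nonneg hb0 (sub_nonneg.2 hb)) (by positivity)
  linarith
end

section
/- Let x_L ≤ x_U and y_L ≤ y_U be real numbers. The McCormick set M = {(x, y, w) ∈ ℝ³ : x_L ≤ x ≤ x_U, y_L ≤ y ≤ y_U, w ≥ x_L·y + y_L·x − x_L·y_L, w ≥ x_U·y + y_U·x − x_U·y_U, w ≤ x_U·y + y_L·x − x_U·y_L, w ≤ x_L·y + y_U·x − x_L·y_U} equals the convex hull in ℝ³ of the bilinear graph {(x, y, x·y) : x ∈ [x_L, x_U], y ∈ [y_L, y_U]}. -/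
theorem four_point_mem {s : Set (ℝ × ℝ × ℝ)} (hs : Convex ℝ s) {p q r t : ℝ × ℝ × ℝ}
    (hp : p ∈ s) (hq : q ∈ s) (hr : r ∈ s) (ht : t ∈ s) {a b c d : ℝ}
    (ha : 0 ≤ a) (hb : 0 ≤ b) (hc : 0 ≤ c) (hd : 0 ≤ d) (h : a + b + c + d = 1) :
    a • p + b • q + c • r + d • t ∈ s := by
  have := hs.sum_mem (t := Finset.univ) (w := ![a, b, c, d]) (z := ![p, q, r, t])
    (by intro i _; fin_cases i <;> simpa) (by simpa [Fin.sum_univ_four] using h)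
    (by intro i _; fin_cases i <;> simpa)
  simpa [Fin.sum_univ_four] using this

/-- Al-Khayyal–Falk: the McCormick set equals the convex hull of
the bilinear graph over the box. -/
theorem mccormick_eq_convexHull_bilinear_graph
    (xL xU yL yU : ℝ) (hx : xL ≤ xU) (hy : yL ≤ yU) :
    {p : ℝ × ℝ × ℝ |
        xL ≤ p.1 ∧ p.1 ≤ xU ∧ yL ≤ p.2.1 ∧ p.2.1 ≤ yU ∧
        p.2.2 ≥ xL * p.2.1 + yL * p.1 - xL * yL ∧
        p.2.2 ≥ xU * p.2.1 + yU * p.1 - xU * yU ∧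
        p.2.2 ≤ xU * p.2.1 + yL * p.1 - xU * yL ∧
        p.2.2 ≤ xL * p.2.1 + yU * p.1 - xL * yU} =
      convexHull ℝ
        {p : ℝ × ℝ × ℝ |
          ∃ x ∈ Set.Icc xL xU, ∃ y ∈ Set.Icc yL yU, p = (x, y, x * y)} := by
  apply Set.Subset.antisymm
  · rintro ⟨x, y, w⟩ ⟨h1, h2, h3, h4, h5, h6, h7, h8⟩
    dsimp only at h1 h2 h3 h4 h5 h6 h7 h8
    rcases hx.eq_or_lt with rfl | hx'
    · obtain rfl : x = xL := le_antisymm h2 h1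
      apply subset_convexHull
      refine ⟨x, ⟨h1, h2⟩, y, ⟨h3, h4⟩, ?_⟩
      have : w = x * y := by linarith
      rw [this]
    rcases hy.eq_or_lt with rfl | hy'
    · obtain rfl : y = yL := le_antisymm h4 h3
      apply subset_convexHull
      refine ⟨x, ⟨h1, h2⟩, y, ⟨h3, h4⟩, ?_⟩
      have : w = x * y := by linarith
      rw [this]
    have hX : 0 < xU - xL := sub_pos.2 hx'
    have hY : 0 < yU - yL := sub_pos.2 hy'
    have hD : 0 < (xU - xL) * (yU - yL) := mul_pos hX hY
    have key : ∀ u ∈ Set.Icc xL xU, ∀ v ∈ Set.Icc yL yU, (u, v, u * v) ∈ convexHull ℝ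
        {p : ℝ × ℝ × ℝ |
          ∃ x ∈ Set.Icc xL xU, ∃ y ∈ Set.Icc yL yU, p = (x, y, x * y)} :=
      fun u hu v hv => subset_convexHull ℝ _ ⟨u, hu, v, hv, rfl⟩
    have hxL := Set.left_mem_Icc.2 hx
    have hxU := Set.right_mem_Icc.2 hx
    have hyL := Set.left_mem_Icc.2 hy
    have hyU := Set.right_mem_Icc.2 hy
    have := four_point_mem (convex_convexHull ℝ _) (key _ hxL _ hyL) (key _ hxL _ hyU)
      (key _ hxU _ hyL) (key _ hxU _ hyU)
      (a := (w - (xU * y + yU * x - xU * yU)) / ((xU - xL) * (yU - yL)))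
      (b := (xU * y + yL * x - xU * yL - w) / ((xU - xL) * (yU - yL)))
      (c := (xL * y + yU * x - xL * yU - w) / ((xU - xL) * (yU - yL)))
      (d := (w - (xL * y + yL * x - xL * yL)) / ((xU - xL) * (yU - yL)))
      (div_nonneg (by linarith) hD.le) (div_nonneg (by linarith) hD.le)
      (div_nonneg (by linarith) hD.le) (div_nonneg (by linarith) hD.le)
      (by rw [← add_div, ← add_div, ← add_div, div_eq_one_iff_eq hD.ne']; ring)
    convert this using 1
    have hX' := hX.ne'
    have hY' := hY.ne'
    ext
    · simp only [Prod.fst_add, Prod.smul_fst, smul_eq_mul]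
      field_simp
      ring
    · simp only [Prod.fst_add, Prod.snd_add, Prod.smul_fst, Prod.smul_snd, smul_eq_mul]
      field_simp
      ring
    · simp only [Prod.snd_add, Prod.smul_snd, smul_eq_mul]
      field_simp
      ring
  · apply convexHull_min
    · rintro _ ⟨x, ⟨h1, h2⟩, y, ⟨h3, h4⟩, rfl⟩
      refine ⟨h1, h2, h3, h4, ?_, ?_, ?_, ?_⟩ <;> dsimp only
      · nlinarith [mul_nonneg (sub_nonneg.2 h1) (sub_nonneg.2 h3)]
      · nlinarith [mul_nonneg (sub_nonneg.2 h2) (sub_nonneg.2 h4)]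
      · nlinarith [mul_nonneg (sub_nonneg.2 h2) (sub_nonneg.2 h3)]
      · nlinarith [mul_nonneg (sub_nonneg.2 h1) (sub_nonneg.2 h4)]
    · rintro ⟨x, y, w⟩ ⟨h1, h2, h3, h4, h5, h6, h7, h8⟩ ⟨x', y', w'⟩
        ⟨k1, k2, k3, k4, k5, k6, k7, k8⟩ a b ha hb hab
      dsimp only at h1 h2 h3 h4 h5 h6 h7 h8 k1 k2 k3 k4 k5 k6 k7 k8
      obtain rfl : b = 1 - a := by linarith
      simp only [Set.mem_setOf_eq, Prod.smul_mk, Prod.mk_add_mk, smul_eq_mul]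
      refine ⟨?_, ?_, ?_, ?_, ?_, ?_, ?_, ?_⟩
      · linarith [mul_le_mul_of_nonneg_left h1 ha, mul_le_mul_of_nonneg_left k1 hb]
      · linarith [mul_le_mul_of_nonneg_left h2 ha, mul_le_mul_of_nonneg_left k2 hb]
      · linarith [mul_le_mul_of_nonneg_left h3 ha, mul_le_mul_of_nonneg_left k3 hb]
      · linarith [mul_le_mul_of_nonneg_left h4 ha, mul_le_mul_of_nonneg_left k4 hb]
      · linarith [mul_le_mul_of_nonneg_left h5 ha, mul_le_mul_of_nonneg_left k5 hb]
      · linarith [mul_le_mul_of_nonneg_left h6 ha, mul_le_mul_of_nonneg_left k6 hb]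
      · linarith [mul_le_mul_of_nonneg_left h7 ha, mul_le_mul_of_nonneg_left k7 hb]
      · linarith [mul_le_mul_of_nonneg_left h8 ha, mul_le_mul_of_nonneg_left k8 hb]
end

section
/- Quadratic convergence of the tightening step: let c > 0, ε ∈ [0, 1], m* > 0 and τ* > 0, and set the tightened bounds m_L = (1 − ε)·m*, m_U = (1 + ε)·m*, τ_L = (1 − ε)·τ*, τ_U = (1 + ε)·τ*. If m ∈ [m_L, m_U], τ ∈ [τ_L, τ_U], and w satisfies the four McCormick envelope inequalities for the product c·m·τ with these bounds, then |w − c·m·τ| ≤ c·ε²·m*·τ*. -/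
lemma mcc_aux (c A B a b Y : ℝ) (hc : 0 < c) (ha1 : 0 ≤ A + a) (ha2 : 0 ≤ A - a)
    (hb1 : 0 ≤ B + b) (hb2 : 0 ≤ B - b)
    (h1 : Y ≤ c * ((A + a) * (B + b))) (h2 : Y ≤ c * ((A - a) * (B - b))) :
    Y ≤ c * (A * B) := by
  have hA : 0 ≤ A := by linarith
  have hB : 0 ≤ B := by linarith
  have hAB : 0 ≤ A * B := mul_nonneg hA hB
  rcases le_total ((A + a) * (B + b)) (A * B) with h | h
  · exact h1.trans (mul_le_mul_of_nonneg_left h hc.le)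
  · refine h2.trans (mul_le_mul_of_nonneg_left ?_ hc.le)
    by_contra hn
    push Not at hn
    have e1 : (A * B) * (A * B) < ((A - a) * (B - b)) * ((A + a) * (B + b)) := by
      have hQ : 0 < (A - a) * (B - b) := lt_of_le_of_lt hAB hn
      rcases hAB.eq_or_lt with h0 | h0
      · exfalso
        rcases mul_eq_zero.mp h0.symm with h' | h'
        · have : A - a = 0 := by linarith
          rw [this] at hQ; simp at hQ
        · have : B - b = 0 := by linarith
          rw [this] at hQ; simp at hQ
      · nlinarith
    have e2 : (A ^ 2 - a ^ 2) * (B ^ 2 - b ^ 2) ≤ A ^ 2 * B ^ 2 := by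
      have hx : 0 ≤ B ^ 2 - b ^ 2 := by nlinarith
      nlinarith [mul_nonneg (sq_nonneg a) hx, mul_nonneg (sq_nonneg A) (sq_nonneg b)]
    nlinarith

/-- quadratic convergence of the tightening step. -/
theorem mccormick_tightening_quadratic
    (c ε mStar τStar mL mU τL τU m τ w : ℝ)
    (hc : 0 < c) (hε0 : 0 ≤ ε) (hε1 : ε ≤ 1)
    (hmStar : 0 < mStar) (hτStar : 0 < τStar)
    (hmL : mL = (1 - ε) * mStar) (hmU : mU = (1 + ε) * mStar)
    (hτL : τL = (1 - ε) * τStar) (hτU : τU = (1 + ε) * τStar)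
    (hm1 : mL ≤ m) (hm2 : m ≤ mU) (hτ1 : τL ≤ τ) (hτ2 : τ ≤ τU)
    (h1 : w ≥ c * (mL * τ + τL * m - mL * τL))
    (h2 : w ≥ c * (mU * τ + τU * m - mU * τU))
    (h3 : w ≤ c * (mU * τ + τL * m - mU * τL))
    (h4 : w ≤ c * (mL * τ + τU * m - mL * τU)) :
    |w - c * m * τ| ≤ c * ε ^ 2 * mStar * τStar := by
  subst hmL hmU hτL hτU
  have hl := mcc_aux c (ε * mStar) (ε * τStar) (m - mStar) (τ - τStar) (c * m * τ - w) hc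
    (by linarith) (by linarith) (by linarith) (by linarith) (by linarith) (by linarith)
  have hu := mcc_aux c (ε * mStar) (ε * τStar) (m - mStar) (-(τ - τStar)) (w - c * m * τ) hc
    (by linarith) (by linarith) (by linarith) (by linarith) (by linarith) (by linarith)
  rw [abs_le]
  constructor <;> linarith
end
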